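/- arXiv:math/0508360 — 2 statements merged into one kernel-verified Lean document; each statement's English description precedes it below -/
import Mathlib

section
/- Let E be a real normed vector space, let L_d : E⁴ → ℝ be Fréchet differentiable, let M, N ≥ 2, and let q : {0,…,M} × {0,…,N} → E be a grid of field values. Define the discrete action S_d = ∑_{i=0}^{M−1} ∑_{j=0}^{N−1} L_d(q_{i,j}, q_{i+1,j}, q_{i,j+1}, q_{i+1,j+1}). Then for each interior grid point (i,j) with 1 ≤ i ≤ M−1 and 1 ≤ j ≤ N−1, the Fréchet partial derivative of S_d with respect to q_{i,j} equals D₁L_d(q_{i,j}, q_{i+1,j}, q_{i,j+1}, q_{i+1,j+1}) + D₂L_d(q_{i−1,j}, q_{i,j}, q_{i−1,j+1}, q_{i,j+1}) + D₃L_d(q_{i,j−1}, q_{i+1,j−1}, q_{i,j}, q_{i+1,j}) + D₄L_d(q_{i−1,j−1}, q_{i,j−1}, q_{i−1,j}, q_{i,j}). Consequently, S_d is stationary with respect to variations of all interior grid values if and only if this four-term discrete Euler–Lagrange equation equals zero at every interior grid point. -/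
/-!
Changing the value at a node changes only the terms of the action that come from the cells having
that node as a corner. An interior node is a corner of exactly four cells, and it is the first,
second, third or fourth corner according to which of the four it is seen from.
-/

open Finset Function

/-- The field values at the corners of the cell with lower left node `c = (a, b)`, in the order
`(a, b)`, `(a + 1, b)`, `(a, b + 1)`, `(a + 1, b + 1)` in which a discrete Lagrangian takes its
arguments. -/
def cellValues {E : Type*} (q : ℕ × ℕ → E) (c : ℕ × ℕ) : E × E × E × E :=
  (q (c.1, c.2), q (c.1 + 1, c.2), q (c.1, c.2 + 1), q (c.1 + 1, c.2 + 1))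

/-- The cells having `p` as a corner, each named by its lower left node. By truncated subtraction
this is correct also for nodes on the lines `p.1 = 0` and `p.2 = 0`. -/
def adjacentCells (p : ℕ × ℕ) : Finset (ℕ × ℕ) :=
  {p.1 - 1, p.1} ×ˢ {p.2 - 1, p.2}

/-- The discrete action of a field on the grid of `M × N` cells. The discrete Lagrangian may vary
from cell to cell, as it does on a nonuniform grid. -/
def discreteAction {E F : Type*} [AddCommMonoid F] (L : ℕ × ℕ → E × E × E × E → F) (M N : ℕ)
    (q : ℕ × ℕ → E) : F :=
  ∑ a ∈ range M, ∑ b ∈ range N, L (a, b) (cellValues q (a, b))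

/-- The left-hand side `D₁L + D₂L + D₃L + D₄L` of the discrete Euler–Lagrange equation at the node
`(i, j)`. It is meaningful only for `1 ≤ i` and `1 ≤ j`, since the subtractions are truncated. -/
noncomputable def discreteEulerLagrange (𝕜 : Type*) {E F : Type*} [NontriviallyNormedField 𝕜]
    [NormedAddCommGroup E] [NormedSpace 𝕜 E] [NormedAddCommGroup F] [NormedSpace 𝕜 F]
    (L : ℕ × ℕ → E × E × E × E → F) (q : ℕ × ℕ → E) (i j : ℕ) : E →L[𝕜] F :=
  fderiv 𝕜 (fun x => L (i, j) (x, q (i + 1, j), q (i, j + 1), q (i + 1, j + 1))) (q (i, j))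
    + fderiv 𝕜 (fun x => L (i - 1, j) (q (i - 1, j), x, q (i - 1, j + 1), q (i, j + 1))) (q (i, j))
    + fderiv 𝕜 (fun x => L (i, j - 1) (q (i, j - 1), q (i + 1, j - 1), x, q (i + 1, j))) (q (i, j))
    + fderiv 𝕜 (fun x => L (i - 1, j - 1) (q (i - 1, j - 1), q (i, j - 1), q (i - 1, j), x))
        (q (i, j))

theorem adjacentCells_subset {M N : ℕ} {p : ℕ × ℕ} (hM : p.1 < M) (hN : p.2 < N) :
    adjacentCells p ⊆ range M ×ˢ range N := by
  refine product_subset_product ?_ ?_ <;> grind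

theorem sum_adjacentCells_succ {A : Type*} [AddCommMonoid A] (f : ℕ × ℕ → A) (k l : ℕ) :
    ∑ c ∈ adjacentCells (k + 1, l + 1), f c
      = f (k + 1, l + 1) + f (k, l + 1) + f (k + 1, l) + f (k, l) := by
  simp only [adjacentCells, add_tsub_cancel_right, sum_product, sum_pair k.succ_ne_self.symm,
    sum_pair l.succ_ne_self.symm]
  abel

theorem cellValues_update_of_notMem_adjacentCells {E : Type*} (q : ℕ × ℕ → E) {p c : ℕ × ℕ}
    (hc : c ∉ adjacentCells p) (x : E) : cellValues (update q p x) c = cellValues q c := by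
  obtain ⟨i, j⟩ := p
  obtain ⟨a, b⟩ := c
  have not_both : ¬((a = i - 1 ∨ a = i) ∧ (b = j - 1 ∨ b = j)) := by
    simpa only [adjacentCells, mem_product, mem_insert, mem_singleton] using hc
  have corner_ne {a' b' : ℕ} (ha : a' = a ∨ a' = a + 1) (hb : b' = b ∨ b' = b + 1) :
      (a', b') ≠ (i, j) := by
    rw [Ne, Prod.mk.injEq]
    omega
  simp [cellValues, corner_ne]

section Derivative

variable {𝕜 E F : Type*} [NontriviallyNormedField 𝕜] [NormedAddCommGroup E] [NormedSpace 𝕜 E]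
  [NormedAddCommGroup F] [NormedSpace 𝕜 F]

theorem differentiable_update_apply {ι : Type*} [DecidableEq ι] (q : ι → E) (p r : ι) :
    Differentiable 𝕜 fun x => update q p x r := by
  obtain rfl | hne := eq_or_ne r p
  · simpa only [update_self] using differentiable_fun_id
  · simpa only [update_of_ne hne] using differentiable_const (q r)

theorem differentiable_cellValues_update (q : ℕ × ℕ → E) (p c : ℕ × ℕ) :
    Differentiable 𝕜 fun x => cellValues (update q p x) c :=
  (differentiable_update_apply q p _).prodMk <| (differentiable_update_apply q p _).prodMk <|
    (differentiable_update_apply q p _).prodMk (differentiable_update_apply q p _)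

theorem differentiableAt_comp_cellValues_update {f : E × E × E × E → F} {q : ℕ × ℕ → E}
    {c : ℕ × ℕ} (hf : DifferentiableAt 𝕜 f (cellValues q c)) (p : ℕ × ℕ) :
    DifferentiableAt 𝕜 (fun x => f (cellValues (update q p x) c)) (q p) := by
  refine DifferentiableAt.comp (q p) ?_ (differentiable_cellValues_update q p c (q p))
  rwa [update_eq_self]

theorem fderiv_discreteAction_update {L : ℕ × ℕ → E × E × E × E → F} {M N : ℕ} {q : ℕ × ℕ → E}
    (hL : ∀ c ∈ range M ×ˢ range N, DifferentiableAt 𝕜 (L c) (cellValues q c)) {p : ℕ × ℕ}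
    (hM : p.1 < M) (hN : p.2 < N) :
    fderiv 𝕜 (fun x => discreteAction L M N (update q p x)) (q p)
      = ∑ c ∈ adjacentCells p, fderiv 𝕜 (fun x => L c (cellValues (update q p x) c)) (q p) := by
  have fderiv_eq_zero (c : ℕ × ℕ) (hc : c ∉ adjacentCells p) :
      fderiv 𝕜 (fun x => L c (cellValues (update q p x) c)) (q p) = 0 := by
    simp only [cellValues_update_of_notMem_adjacentCells q hc, fderiv_fun_const, Pi.zero_apply]
  calc fderiv 𝕜 (fun x => discreteAction L M N (update q p x)) (q p)
      = fderiv 𝕜 (fun x => ∑ c ∈ range M ×ˢ range N, L c (cellValues (update q p x) c)) (q p) := by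
        simp only [discreteAction, sum_product]
    _ = ∑ c ∈ range M ×ˢ range N, fderiv 𝕜 (fun x => L c (cellValues (update q p x) c)) (q p) :=
        fderiv_fun_sum fun c hc => differentiableAt_comp_cellValues_update (hL c hc) p
    _ = ∑ c ∈ adjacentCells p, fderiv 𝕜 (fun x => L c (cellValues (update q p x) c)) (q p) :=
        (sum_subset (adjacentCells_subset hM hN) fun c _ hc => fderiv_eq_zero c hc).symm

theorem sum_adjacentCells_fderiv_eq_discreteEulerLagrange (L : ℕ × ℕ → E × E × E × E → F)
    (q : ℕ × ℕ → E) {i j : ℕ} (hi : 1 ≤ i) (hj : 1 ≤ j) :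
    ∑ c ∈ adjacentCells (i, j),
        fderiv 𝕜 (fun x => L c (cellValues (update q (i, j) x) c)) (q (i, j))
      = discreteEulerLagrange 𝕜 L q i j := by
  obtain ⟨k, rfl⟩ := Nat.exists_eq_add_of_le' hi
  obtain ⟨l, rfl⟩ := Nat.exists_eq_add_of_le' hj
  rw [sum_adjacentCells_succ]
  simp [cellValues, discreteEulerLagrange]

theorem multisymplectic_discrete_euler_lagrange_general
    (L : ℕ × ℕ → E × E × E × E → F) (M N : ℕ) (q : ℕ × ℕ → E)
    (hL : ∀ c ∈ range M ×ˢ range N, DifferentiableAt 𝕜 (L c) (cellValues q c)) :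
    (∀ i j, 1 ≤ i → i ≤ M - 1 → 1 ≤ j → j ≤ N - 1 →
      fderiv 𝕜 (fun x => discreteAction L M N (update q (i, j) x)) (q (i, j))
        = discreteEulerLagrange 𝕜 L q i j) ∧
    ((∀ i j, 1 ≤ i → i ≤ M - 1 → 1 ≤ j → j ≤ N - 1 →
        fderiv 𝕜 (fun x => discreteAction L M N (update q (i, j) x)) (q (i, j)) = 0) ↔
      ∀ i j, 1 ≤ i → i ≤ M - 1 → 1 ≤ j → j ≤ N - 1 → discreteEulerLagrange 𝕜 L q i j = 0) := by
  have fderiv_eq (i j : ℕ) (hi : 1 ≤ i) (hiM : i ≤ M - 1) (hj : 1 ≤ j) (hjN : j ≤ N - 1) :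
      fderiv 𝕜 (fun x => discreteAction L M N (update q (i, j) x)) (q (i, j))
        = discreteEulerLagrange 𝕜 L q i j :=
    (fderiv_discreteAction_update hL (by grind) (by grind)).trans
      (sum_adjacentCells_fderiv_eq_discreteEulerLagrange L q hi hj)
  refine ⟨fderiv_eq, ?_⟩
  refine forall₂_congr fun i j => forall₄_congr fun hi hiM hj hjN => ?_
  rw [fderiv_eq i j hi hiM hj hjN]

end Derivative

/-- For the multisymplectic discrete action
`S_d = ∑_{i<M} ∑_{j<N} L_d (q_{i,j}, q_{i+1,j}, q_{i,j+1}, q_{i+1,j+1})`, the partial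
derivative with respect to an interior grid value `q_{i,j}` is the four-term expression
`D₁L_d + D₂L_d + D₃L_d + D₄L_d` of the context; consequently `S_d` is stationary with
respect to variations of all interior grid values if and only if the four-term discrete
Euler–Lagrange equation holds at every interior grid point. -/
theorem multisymplectic_discrete_euler_lagrange
    {E : Type*} [NormedAddCommGroup E] [NormedSpace ℝ E]
    (Ld : E × E × E × E → ℝ) (hLd : Differentiable ℝ Ld)
    (M N : ℕ) (hM : 2 ≤ M) (hN : 2 ≤ N) (q : ℕ × ℕ → E) :
    (∀ i j, 1 ≤ i → i ≤ M - 1 → 1 ≤ j → j ≤ N - 1 →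
      fderiv ℝ (fun x => ∑ a ∈ Finset.range M, ∑ b ∈ Finset.range N,
          Ld (Function.update q (i, j) x (a, b),
              Function.update q (i, j) x (a + 1, b),
              Function.update q (i, j) x (a, b + 1),
              Function.update q (i, j) x (a + 1, b + 1))) (q (i, j))
        = fderiv ℝ (fun x => Ld (x, q (i + 1, j), q (i, j + 1), q (i + 1, j + 1))) (q (i, j))
          + fderiv ℝ (fun x => Ld (q (i - 1, j), x, q (i - 1, j + 1), q (i, j + 1))) (q (i, j))
          + fderiv ℝ (fun x => Ld (q (i, j - 1), q (i + 1, j - 1), x, q (i + 1, j))) (q (i, j))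
          + fderiv ℝ (fun x => Ld (q (i - 1, j - 1), q (i, j - 1), q (i - 1, j), x)) (q (i, j))) ∧
    ((∀ i j, 1 ≤ i → i ≤ M - 1 → 1 ≤ j → j ≤ N - 1 →
        fderiv ℝ (fun x => ∑ a ∈ Finset.range M, ∑ b ∈ Finset.range N,
            Ld (Function.update q (i, j) x (a, b),
                Function.update q (i, j) x (a + 1, b),
                Function.update q (i, j) x (a, b + 1),
                Function.update q (i, j) x (a + 1, b + 1))) (q (i, j)) = 0) ↔
      (∀ i j, 1 ≤ i → i ≤ M - 1 → 1 ≤ j → j ≤ N - 1 →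
        fderiv ℝ (fun x => Ld (x, q (i + 1, j), q (i, j + 1), q (i + 1, j + 1))) (q (i, j))
          + fderiv ℝ (fun x => Ld (q (i - 1, j), x, q (i - 1, j + 1), q (i, j + 1))) (q (i, j))
          + fderiv ℝ (fun x => Ld (q (i, j - 1), q (i + 1, j - 1), x, q (i + 1, j))) (q (i, j))
          + fderiv ℝ (fun x => Ld (q (i - 1, j - 1), q (i, j - 1), q (i - 1, j), x)) (q (i, j))
          = 0)) := by
  exact multisymplectic_discrete_euler_lagrange_general (fun _ => Ld) M N q fun _ _ => hLd _
end

section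
/- Let E be a real normed vector space and L : E × E → ℝ a C¹ Lagrangian. For q₀, q₁ ∈ E and h > 0 define the midpoint discrete Lagrangian L_d(q₀,q₁,h) = h·L((q₀+q₁)/2, (q₁−q₀)/h). Let N ≥ 3, let q₀,…,q_N ∈ E, h₀,…,h_{N−1} > 0, λ₀,…,λ_{N−2} ∈ E*, and ω₀,…,ω_{N−2} ∈ ℝ, and write mᵢ = (qᵢ+q_{i+1})/2 and vᵢ = (q_{i+1}−qᵢ)/hᵢ. Suppose the variational (Karush–Kuhn–Tucker) equations hold: (i) 0 = L(mᵢ,vᵢ) − D₂L(mᵢ,vᵢ)[vᵢ] − ωᵢ for i = 0,…,N−2; (ii) 0 = −L(mᵢ,vᵢ) + D₂L(mᵢ,vᵢ)[vᵢ] + ω_{i−1} for i = 1,…,N−1; (iii) 0 = hᵢ·[(1/2)·D₁L(mᵢ,vᵢ) + (1/hᵢ)·D₂L(mᵢ,vᵢ)] − λᵢ for i = 0,…,N−2; (iv) 0 = hᵢ·[(1/2)·D₁L(mᵢ,vᵢ) − (1/hᵢ)·D₂L(mᵢ,vᵢ)] + λ_{i−1} for i = 1,…,N−1. Define the discrete energy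 E_d(qᵢ,q_{i+1},hᵢ) = −L(mᵢ,vᵢ) + D₂L(mᵢ,vᵢ)[vᵢ]. Then after eliminating the multipliers one obtains, for all admissible i: conservation of discrete energy, E_d(qᵢ, q_{i+1}, hᵢ) = E_d(q_{i+1}, q_{i+2}, h_{i+1}), and the discrete Euler–Lagrange equation, D₂L_d(qᵢ, q_{i+1}, hᵢ) + D₁L_d(q_{i+1}, q_{i+2}, h_{i+1}) = 0. -/
/-- The midpoint discrete Lagrangian `L_d (q₀, q₁, h) = h · L ((q₀+q₁)/2, (q₁−q₀)/h)`. -/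
noncomputable def midpointLd {E : Type*} [NormedAddCommGroup E] [NormedSpace ℝ E]
    (L : E × E → ℝ) (a b : E) (t : ℝ) : ℝ :=
  t * L (((1 : ℝ) / 2) • (a + b), t⁻¹ • (b - a))

/-- The midpoint `mᵢ = (qᵢ + q_{i+1})/2`. -/
noncomputable def midpt {E : Type*} [NormedAddCommGroup E] [NormedSpace ℝ E]
    (q : ℕ → E) (i : ℕ) : E :=
  ((1 : ℝ) / 2) • (q i + q (i + 1))

/-- The discrete velocity `vᵢ = (q_{i+1} − qᵢ)/hᵢ`. -/
noncomputable def discVel {E : Type*} [NormedAddCommGroup E] [NormedSpace ℝ E]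
    (q : ℕ → E) (h : ℕ → ℝ) (i : ℕ) : E :=
  (h i)⁻¹ • (q (i + 1) - q i)

/-- The discrete energy `E_d (qᵢ, q_{i+1}, hᵢ) = −L(mᵢ, vᵢ) + D₂L(mᵢ, vᵢ)[vᵢ]`. -/
noncomputable def discEnergy {E : Type*} [NormedAddCommGroup E] [NormedSpace ℝ E]
    (L : E × E → ℝ) (q : ℕ → E) (h : ℕ → ℝ) (i : ℕ) : ℝ :=
  -L (midpt q i, discVel q h i)
    + (fderiv ℝ (fun w => L (midpt q i, w)) (discVel q h i)) (discVel q h i)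

/-!
By the chain rule, `D₂L_d = (h/2) D₁L + D₂L` and `D₁L_d = (h/2) D₁L - D₂L`, with the derivatives
of `L` taken at the midpoint and the discrete velocity. Hence equations (iii) and (iv) say that
`D₂L_d` on step `i` is `λᵢ` and `D₁L_d` on step `i + 1` is `-λᵢ`, while (i) and (ii) say that the
discrete energies of these two steps are both `-ωᵢ`.
-/

section PartialDerivatives

variable {𝕜 E F G H : Type*} [NontriviallyNormedField 𝕜]
  [NormedAddCommGroup E] [NormedSpace 𝕜 E] [NormedAddCommGroup F] [NormedSpace 𝕜 F]
  [NormedAddCommGroup G] [NormedSpace 𝕜 G] [NormedAddCommGroup H] [NormedSpace 𝕜 H]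

theorem fderiv_eq_coprod_partial {f : E × F → G} {a : E} {b : F}
    (hf : DifferentiableAt 𝕜 f (a, b)) :
    fderiv 𝕜 f (a, b) =
      (fderiv 𝕜 (fun x => f (x, b)) a).coprod (fderiv 𝕜 (fun y => f (a, y)) b) := by
  have partial_left : fderiv 𝕜 (fun x => f (x, b)) a = (fderiv 𝕜 f (a, b)).comp (.inl 𝕜 E F) :=
    (hf.hasFDerivAt.comp a (hasFDerivAt_prodMk_left a b)).fderiv
  have partial_right : fderiv 𝕜 (fun y => f (a, y)) b = (fderiv 𝕜 f (a, b)).comp (.inr 𝕜 E F) :=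
    (hf.hasFDerivAt.comp b (hasFDerivAt_prodMk_right a b)).fderiv
  rw [partial_left, partial_right, ContinuousLinearMap.coprod_comp_inl_inr]

theorem hasFDerivAt_comp_prodMk {f : E × F → G} {u : H → E} {v : H → F} {x : H}
    {u' : H →L[𝕜] E} {v' : H →L[𝕜] F} (hf : DifferentiableAt 𝕜 f (u x, v x))
    (hu : HasFDerivAt u u' x) (hv : HasFDerivAt v v' x) :
    HasFDerivAt (fun z => f (u z, v z))
      ((fderiv 𝕜 (fun a => f (a, v x)) (u x)).comp u' +
        (fderiv 𝕜 (fun b => f (u x, b)) (v x)).comp v') x := by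
  have chain := hf.hasFDerivAt.comp x (hu.prodMk hv)
  rw [fderiv_eq_coprod_partial hf] at chain
  exact chain

end PartialDerivatives

section MidpointLagrangian

variable {E : Type*} [NormedAddCommGroup E] [NormedSpace ℝ E] {L : E × E → ℝ} {a b : E} {t : ℝ}

theorem fderiv_midpointLd_right (ht : t ≠ 0)
    (hL : DifferentiableAt ℝ L (((1 : ℝ) / 2) • (a + b), t⁻¹ • (b - a))) :
    fderiv ℝ (fun x => midpointLd L a x t) b =
      (t / 2) • fderiv ℝ (fun x => L (x, t⁻¹ • (b - a))) (((1 : ℝ) / 2) • (a + b)) +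
        fderiv ℝ (fun w => L (((1 : ℝ) / 2) • (a + b), w)) (t⁻¹ • (b - a)) := by
  have midpoint_deriv :
      HasFDerivAt (fun x => ((1 : ℝ) / 2) • (a + x)) (((1 : ℝ) / 2) • .id ℝ E) b :=
    ((hasFDerivAt_id (𝕜 := ℝ) b).const_add a).const_smul _
  have velocity_deriv : HasFDerivAt (fun x => t⁻¹ • (x - a)) (t⁻¹ • .id ℝ E) b :=
    ((hasFDerivAt_id (𝕜 := ℝ) b).sub_const a).const_smul _
  refine ((hasFDerivAt_comp_prodMk hL midpoint_deriv velocity_deriv).const_mul t).fderiv.trans ?_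
  rw [ContinuousLinearMap.comp_smul, ContinuousLinearMap.comp_smul, ContinuousLinearMap.comp_id,
    ContinuousLinearMap.comp_id, smul_add, smul_smul, mul_one_div, smul_inv_smul₀ ht]

theorem fderiv_midpointLd_left (ht : t ≠ 0)
    (hL : DifferentiableAt ℝ L (((1 : ℝ) / 2) • (a + b), t⁻¹ • (b - a))) :
    fderiv ℝ (fun x => midpointLd L x b t) a =
      (t / 2) • fderiv ℝ (fun x => L (x, t⁻¹ • (b - a))) (((1 : ℝ) / 2) • (a + b)) -
        fderiv ℝ (fun w => L (((1 : ℝ) / 2) • (a + b), w)) (t⁻¹ • (b - a)) := by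
  have midpoint_deriv :
      HasFDerivAt (fun x => ((1 : ℝ) / 2) • (x + b)) (((1 : ℝ) / 2) • .id ℝ E) a :=
    ((hasFDerivAt_id (𝕜 := ℝ) a).add_const b).const_smul _
  have velocity_deriv : HasFDerivAt (fun x => t⁻¹ • (b - x)) (t⁻¹ • -.id ℝ E) a :=
    ((hasFDerivAt_id (𝕜 := ℝ) a).const_sub b).const_smul _
  refine ((hasFDerivAt_comp_prodMk hL midpoint_deriv velocity_deriv).const_mul t).fderiv.trans ?_
  rw [ContinuousLinearMap.comp_smul, ContinuousLinearMap.comp_smul, ContinuousLinearMap.comp_neg,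
    ContinuousLinearMap.comp_id, ContinuousLinearMap.comp_id, smul_neg, ← sub_eq_add_neg, smul_sub,
    smul_smul, mul_one_div, smul_inv_smul₀ ht]

end MidpointLagrangian

theorem sem_integrator_energy_and_del_general
    {E : Type*} [NormedAddCommGroup E] [NormedSpace ℝ E] (L : E × E → ℝ) (N : ℕ)
    (q : ℕ → E) (h : ℕ → ℝ) (hh : ∀ i, i < N → h i ≠ 0)
    (hL : ∀ i, i < N → DifferentiableAt ℝ L (midpt q i, discVel q h i))
    (lam : ℕ → E →L[ℝ] ℝ) (om : ℕ → ℝ)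
    (h₁ : ∀ i, i + 2 ≤ N →
      0 = L (midpt q i, discVel q h i)
          - (fderiv ℝ (fun w => L (midpt q i, w)) (discVel q h i)) (discVel q h i)
          - om i)
    (h₂ : ∀ i, 1 ≤ i → i + 1 ≤ N →
      0 = -L (midpt q i, discVel q h i)
          + (fderiv ℝ (fun w => L (midpt q i, w)) (discVel q h i)) (discVel q h i)
          + om (i - 1))
    (h₃ : ∀ i, i + 2 ≤ N →
      0 = h i • (((1 : ℝ) / 2) • fderiv ℝ (fun x => L (x, discVel q h i)) (midpt q i)
            + (h i)⁻¹ • fderiv ℝ (fun w => L (midpt q i, w)) (discVel q h i))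
          - lam i)
    (h₄ : ∀ i, 1 ≤ i → i + 1 ≤ N →
      0 = h i • (((1 : ℝ) / 2) • fderiv ℝ (fun x => L (x, discVel q h i)) (midpt q i)
            - (h i)⁻¹ • fderiv ℝ (fun w => L (midpt q i, w)) (discVel q h i))
          + lam (i - 1)) :
    ∀ i, i + 2 ≤ N →
      discEnergy L q h i = discEnergy L q h (i + 1) ∧
      fderiv ℝ (fun x => midpointLd L (q i) x (h i)) (q (i + 1))
        + fderiv ℝ (fun x => midpointLd L x (q (i + 2)) (h (i + 1))) (q (i + 1)) = 0 := by
  intro i hi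
  have hi₀ : i < N := by lia
  have hi₁ : i + 1 < N := by lia
  have energy_left : discEnergy L q h i = -om i := by
    unfold discEnergy
    linarith [h₁ i hi]
  have energy_right : discEnergy L q h (i + 1) = -om i :=
    eq_neg_of_add_eq_zero_left (h₂ (i + 1) (by lia) hi₁).symm
  have momentum_left : fderiv ℝ (fun x => midpointLd L (q i) x (h i)) (q (i + 1)) = lam i := by
    refine (fderiv_midpointLd_right (hh i hi₀) (hL i hi₀)).trans ?_
    have stationarity := sub_eq_zero.1 (h₃ i hi).symm
    rwa [smul_add, smul_inv_smul₀ (hh i hi₀), smul_smul, mul_one_div] at stationarity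
  have momentum_right :
      fderiv ℝ (fun x => midpointLd L x (q (i + 2)) (h (i + 1))) (q (i + 1)) = -lam i := by
    refine (fderiv_midpointLd_left (hh (i + 1) hi₁) (hL (i + 1) hi₁)).trans ?_
    have stationarity := eq_neg_of_add_eq_zero_left (h₄ (i + 1) (by lia) hi₁).symm
    rwa [smul_sub, smul_inv_smul₀ (hh (i + 1) hi₁), smul_smul, mul_one_div] at stationarity
  exact ⟨energy_left.trans energy_right.symm, by rw [momentum_left, momentum_right, add_neg_cancel]⟩

/-- For the symplectic-energy-momentum integrator with midpoint discrete Lagrangian, the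
variational (KKT) equations imply, after eliminating the multipliers, conservation of the
discrete energy and the discrete Euler–Lagrange equations. -/
theorem sem_integrator_energy_and_del
    {E : Type*} [NormedAddCommGroup E] [NormedSpace ℝ E]
    (L : E × E → ℝ) (hL : ContDiff ℝ 1 L)
    (N : ℕ) (hN : 3 ≤ N)
    (q : ℕ → E) (h : ℕ → ℝ) (hh : ∀ i, i < N → 0 < h i)
    (lam : ℕ → E →L[ℝ] ℝ) (om : ℕ → ℝ)
    (h₁ : ∀ i, i + 2 ≤ N →
      0 = L (midpt q i, discVel q h i)
          - (fderiv ℝ (fun w => L (midpt q i, w)) (discVel q h i)) (discVel q h i)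
          - om i)
    (h₂ : ∀ i, 1 ≤ i → i + 1 ≤ N →
      0 = -L (midpt q i, discVel q h i)
          + (fderiv ℝ (fun w => L (midpt q i, w)) (discVel q h i)) (discVel q h i)
          + om (i - 1))
    (h₃ : ∀ i, i + 2 ≤ N →
      0 = h i • (((1 : ℝ) / 2) • fderiv ℝ (fun x => L (x, discVel q h i)) (midpt q i)
            + (h i)⁻¹ • fderiv ℝ (fun w => L (midpt q i, w)) (discVel q h i))
          - lam i)
    (h₄ : ∀ i, 1 ≤ i → i + 1 ≤ N →
      0 = h i • (((1 : ℝ) / 2) • fderiv ℝ (fun x => L (x, discVel q h i)) (midpt q i)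
            - (h i)⁻¹ • fderiv ℝ (fun w => L (midpt q i, w)) (discVel q h i))
          + lam (i - 1)) :
    ∀ i, i + 2 ≤ N →
      discEnergy L q h i = discEnergy L q h (i + 1) ∧
      fderiv ℝ (fun x => midpointLd L (q i) x (h i)) (q (i + 1))
        + fderiv ℝ (fun x => midpointLd L x (q (i + 2)) (h (i + 1))) (q (i + 1)) = 0 :=
  sem_integrator_energy_and_del_general L N q h (fun i hi => (hh i hi).ne')
    (fun _ _ => (hL.differentiable one_ne_zero).differentiableAt) lam om h₁ h₂ h₃ h₄
end
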